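/- Fix τ > L > 0 and set x_A = (τ, −L), x_B = (τ, L) in two-dimensional Minkowski space. Then for every v with 0 < v < 2Lτ/(τ² + L²), the four points x_A, x_B, Λ_v x_A, Λ_v x_B are pairwise spacelike separated: Q(p − q) < 0 for every pair of distinct points p, q among them. -/

import Mathlib

/-- Minkowski quadratic form `Q(t, x) = t² − x²` on ℝ². -/
def Q (p : ℝ × ℝ) : ℝ := p.1 ^ 2 - p.2 ^ 2

/-- Lorentz factor `γ = (1 − v²)^(−1/2)`. -/
noncomputable def lorentzGamma (v : ℝ) : ℝ := 1 / Real.sqrt (1 - v ^ 2)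

/-- Lorentz boost with velocity `v`: `Λ_v(t, x) = (γ(t − vx), γ(x − vt))`. -/
noncomputable def boost (v : ℝ) (p : ℝ × ℝ) : ℝ × ℝ :=
  (lorentzGamma v * (p.1 - v * p.2), lorentzGamma v * (p.2 - v * p.1))

/-!
All four points lie on one branch of a hyperbola, `t ^ 2 - x ^ 2 = τ ^ 2 - L ^ 2` with `t > 0`,
because boosts preserve both `Q` and the direction of time. In the null coordinates `t - x` and
`t + x` this branch is the graph of a strictly decreasing function and `Q` is the product of the
coordinates, so any two distinct points of it are spacelike separated. Hence the four points only
have to be distinct, and they coincide only for the velocities `0` and `± 2Lτ/(τ² + L²)`, the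
latter being those of the boosts that carry one of `(τ, -L)`, `(τ, L)` to the other.
-/

/-- The branch `t > 0` of the hyperbola `t² − x² = m`: for `m > 0`, the events at proper time `√m`
after the origin. -/
def futureHyperbola (m : ℝ) : Set (ℝ × ℝ) := {p | Q p = m ∧ 0 < p.1}

theorem Q_eq_mul (p : ℝ × ℝ) : Q p = (p.1 - p.2) * (p.1 + p.2) := by
  rw [Q]
  ring

theorem abs_snd_lt_fst_of_mem_futureHyperbola {m : ℝ} (hm : 0 < m) {p : ℝ × ℝ}
    (hp : p ∈ futureHyperbola m) : |p.2| < p.1 := by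
  obtain ⟨rfl, hp0⟩ := hp
  exact abs_lt_of_sq_lt_sq (sub_pos.mp hm) hp0.le

theorem Q_sub_neg_of_mem_futureHyperbola {m : ℝ} (hm : 0 < m) {p q : ℝ × ℝ}
    (hp : p ∈ futureHyperbola m) (hq : q ∈ futureHyperbola m) (hpq : p ≠ q) : Q (p - q) < 0 := by
  have hup : 0 < p.1 - p.2 :=
    sub_pos.mpr (lt_of_abs_lt (abs_snd_lt_fst_of_mem_futureHyperbola hm hp))
  have huq : 0 < q.1 - q.2 :=
    sub_pos.mpr (lt_of_abs_lt (abs_snd_lt_fst_of_mem_futureHyperbola hm hq))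
  have hQp : (p.1 - p.2) * (p.1 + p.2) = m := (Q_eq_mul p).symm.trans hp.1
  have hQq : (q.1 - q.2) * (q.1 + q.2) = m := (Q_eq_mul q).symm.trans hq.1
  have hu : (p.1 - p.2) - (q.1 - q.2) ≠ 0 := by
    intro hu
    have hw : p.1 + p.2 = q.1 + q.2 :=
      mul_left_cancel₀ hup.ne' (by rw [hQp, sub_eq_zero.mp hu, hQq])
    exact hpq (Prod.ext (by linarith) (by linarith))
  have hmul : (p.1 - p.2) * (q.1 - q.2) * Q (p - q) = -(m * ((p.1 - p.2) - (q.1 - q.2)) ^ 2) := by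
    rw [Q_eq_mul, Prod.fst_sub, Prod.snd_sub]
    linear_combination ((p.1 - p.2) - (q.1 - q.2)) * ((q.1 - q.2) * hQp - (p.1 - p.2) * hQq)
  refine neg_of_mul_neg_right ?_ (mul_pos hup huq).le
  rw [hmul]
  exact neg_neg_of_pos (by positivity)

theorem lorentzGamma_neg (v : ℝ) : lorentzGamma (-v) = lorentzGamma v := by
  rw [lorentzGamma, lorentzGamma, neg_sq]

section Boost

variable {v : ℝ}

theorem lorentzGamma_pos (hv : |v| < 1) : 0 < lorentzGamma v :=
  one_div_pos.mpr (Real.sqrt_pos.mpr (sub_pos.mpr ((sq_lt_one_iff_abs_lt_one v).mpr hv)))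

theorem lorentzGamma_sq_mul (hv : |v| < 1) : lorentzGamma v ^ 2 * (1 - v ^ 2) = 1 := by
  have h : 0 < 1 - v ^ 2 := sub_pos.mpr ((sq_lt_one_iff_abs_lt_one v).mpr hv)
  rw [lorentzGamma, div_pow, Real.sq_sqrt h.le, one_pow, one_div_mul_cancel h.ne']

theorem boost_neg_boost (hv : |v| < 1) (p : ℝ × ℝ) : boost (-v) (boost v p) = p := by
  ext
  · simp only [boost, lorentzGamma_neg]
    linear_combination p.1 * lorentzGamma_sq_mul hv
  · simp only [boost, lorentzGamma_neg]
    linear_combination p.2 * lorentzGamma_sq_mul hv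

theorem boost_injective (hv : |v| < 1) : Function.Injective (boost v) :=
  Function.LeftInverse.injective (boost_neg_boost hv)

theorem Q_boost (hv : |v| < 1) (p : ℝ × ℝ) : Q (boost v p) = Q p := by
  simp only [Q, boost]
  linear_combination (p.1 ^ 2 - p.2 ^ 2) * lorentzGamma_sq_mul hv

theorem boost_mem_futureHyperbola (hv : |v| < 1) {m : ℝ} (hm : 0 ≤ m) {p : ℝ × ℝ}
    (hp : p ∈ futureHyperbola m) : boost v p ∈ futureHyperbola m := by
  obtain ⟨rfl, hp0⟩ := hp
  have hp2 : |p.2| ≤ p.1 := abs_le_of_sq_le_sq (sub_nonneg.mp hm) hp0.le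
  refine ⟨Q_boost hv p, mul_pos (lorentzGamma_pos hv) (sub_pos.mpr ?_)⟩
  calc v * p.2 ≤ |v| * |p.2| := (le_abs_self _).trans (abs_mul v p.2).le
    _ ≤ |v| * p.1 := by gcongr
    _ < p.1 := mul_lt_of_lt_one_left hp0 hv

theorem velocity_mul_eq_of_boost_eq {p q : ℝ × ℝ} (h : boost v p = q) :
    v * (p.1 * q.1 - p.2 * q.2) = p.2 * q.1 - p.1 * q.2 := by
  subst h
  simp only [boost]
  ring

theorem boost_ne_self (hv : v ≠ 0) {p : ℝ × ℝ} (hp : Q p ≠ 0) : boost v p ≠ p := by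
  intro h
  have hvQ : v * Q p = 0 := by
    rw [Q]
    linear_combination velocity_mul_eq_of_boost_eq h
  exact mul_ne_zero hv hp hvQ

theorem velocity_eq_of_boost_eq_mk_neg {t x : ℝ} (htx : t ^ 2 + x ^ 2 ≠ 0)
    (h : boost v (t, x) = (t, -x)) : v = 2 * x * t / (t ^ 2 + x ^ 2) :=
  eq_div_of_mul_eq htx (by linear_combination velocity_mul_eq_of_boost_eq h)

end Boost

theorem two_mul_div_sq_add_sq_lt_one {a b : ℝ} (hab : a ≠ b) :
    2 * a * b / (b ^ 2 + a ^ 2) < 1 := by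
  have hsub : 0 < (b - a) ^ 2 := sq_pos_of_ne_zero (sub_ne_zero.mpr hab.symm)
  have hs : 0 < b ^ 2 + a ^ 2 := by linarith [sq_nonneg (b + a), sub_sq b a, add_sq b a]
  exact (div_lt_one hs).mpr (by linarith [sub_sq b a])

theorem injective_vec_boost {v : ℝ} (hv : |v| < 1) {p q : ℝ × ℝ} (hpq : p ≠ q)
    (hp : boost v p ≠ p) (hq : boost v q ≠ q) (hpq' : boost v p ≠ q) (hqp' : boost v q ≠ p) :
    Function.Injective ![p, q, boost v p, boost v q] := by
  have hboost : boost v p ≠ boost v q := (boost_injective hv).ne hpq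
  intro i j hij
  fin_cases i <;> fin_cases j <;> simp_all [eq_comm]

theorem four_points_pairwise_spacelike_general {τ L v : ℝ} (hL : L ≠ 0) (hτL : |L| < τ)
    (hv : |v| < 1) (hv0 : v ≠ 0) (hne : |v| ≠ |2 * L * τ / (τ ^ 2 + L ^ 2)|) :
    Pairwise fun i j : Fin 4 ↦
      Q (![(τ, -L), (τ, L), boost v (τ, -L), boost v (τ, L)] i -
        ![(τ, -L), (τ, L), boost v (τ, -L), boost v (τ, L)] j) < 0 := by
  have hτ : 0 < τ := (abs_nonneg L).trans_lt hτL
  have hm : 0 < τ ^ 2 - L ^ 2 := sub_pos.mpr (sq_lt_sq.mpr (hτL.trans_le (le_abs_self τ)))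
  have hA : (τ, -L) ∈ futureHyperbola (τ ^ 2 - L ^ 2) := ⟨by simp only [Q, neg_sq], hτ⟩
  have hB : (τ, L) ∈ futureHyperbola (τ ^ 2 - L ^ 2) := ⟨rfl, hτ⟩
  have hinj : Function.Injective ![(τ, -L), (τ, L), boost v (τ, -L), boost v (τ, L)] := by
    refine injective_vec_boost hv ?_ (boost_ne_self hv0 (hA.1.trans_ne hm.ne'))
      (boost_ne_self hv0 (hB.1.trans_ne hm.ne')) ?_ ?_
    · exact fun h ↦ hL (self_eq_neg.mp (Prod.ext_iff.mp h).2.symm)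
    · intro h
      have hvA : v = 2 * -L * τ / (τ ^ 2 + (-L) ^ 2) :=
        velocity_eq_of_boost_eq_mk_neg (by positivity) (h.trans (by rw [neg_neg]))
      exact hne (by rw [hvA, neg_sq, mul_neg, neg_mul, neg_div, abs_neg])
    · exact fun h ↦ hne (congrArg abs (velocity_eq_of_boost_eq_mk_neg (by positivity) h))
  have hmem : ∀ i, ![(τ, -L), (τ, L), boost v (τ, -L), boost v (τ, L)] i ∈
      futureHyperbola (τ ^ 2 - L ^ 2) := by
    simp [Fin.forall_fin_succ, hA, hB, boost_mem_futureHyperbola hv hm.le]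
  exact fun i j hij ↦ Q_sub_neg_of_mem_futureHyperbola hm (hmem i) (hmem j) (hinj.ne hij)

/-- Step 1 of Theorem 1 of the paper: with `x_A = (τ, −L)`, `x_B = (τ, L)` for
`τ > L > 0`, and any boost velocity `0 < v < 2Lτ/(τ² + L²)`, the four points
`x_A, x_B, Λ_v x_A, Λ_v x_B` are pairwise spacelike separated. -/
theorem four_points_pairwise_spacelike (τ L : ℝ) (hL : 0 < L) (hτL : L < τ)
    (v : ℝ) (hv0 : 0 < v) (hv1 : v < 2 * L * τ / (τ ^ 2 + L ^ 2))
    (pts : Fin 4 → ℝ × ℝ)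
    (hpts : pts = ![(τ, -L), (τ, L), boost v (τ, -L), boost v (τ, L)]) :
    ∀ i j : Fin 4, i ≠ j → Q (pts i - pts j) < 0 := by
  subst hpts
  rw [← abs_of_pos hv0] at hv1
  exact four_points_pairwise_spacelike_general hL.ne' (by rwa [abs_of_pos hL])
    (hv1.trans (two_mul_div_sq_add_sq_lt_one hτL.ne)) hv0.ne' (hv1.trans_le (le_abs_self _)).ne
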